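/- arXiv:q-alg/9701017 — 2 statements merged into one kernel-verified Lean document; each statement's English description precedes it below -/
import Mathlib

section
/- Let R be a commutative ring, A a unital associative R-algebra, n ≥ 1, 1 ≤ p ≤ n−1, and φ : A^n → A an R-multilinear map that vanishes on (p+1)-fold shuffle products. Then d'φ : A^{n−1} → A vanishes on p-fold shuffle products. (Hence d' maps the Hodge component C^{p,q}(A,A) to C^{p−1,q}(A,A).) -/
/-- Insert the unit `1` at position `i` (0-indexed) into a tuple of length `n-1`. -/
def insUnit {A : Type*} [One A] {n : ℕ} (i : Fin n) (a : Fin (n-1) → A) : Fin n → A :=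
  fun k =>
    if h1 : (k : ℕ) < (i : ℕ) then a ⟨k, by have := i.isLt; omega⟩
    else if h2 : (k : ℕ) = (i : ℕ) then 1
    else a ⟨(k : ℕ) - 1, by have := k.isLt; omega⟩

/-- The differential `d' : C^n(A,A) → C^{n-1}(A,A)`, the alternating sum
`(d'φ)(a_1,…,a_{n-1}) = Σ_{j=1}^{n} (−1)^{n−j} φ(a_1,…,a_{j−1},1,a_j,…,a_{n−1})`
of insertions of the unit `1` into the arguments. -/
def dUnit {A : Type*} [Ring A] {n : ℕ} (φ : (Fin n → A) → A) : (Fin (n-1) → A) → A :=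
  fun a => ∑ i : Fin n, ((-1 : ℤ) ^ (n - 1 - (i : ℕ))) • φ (insUnit i a)

/-- The index of the block (of the composition `c`) containing the 0-indexed position `t`. -/
def blockOf (c : List ℕ) (t : ℕ) : ℕ :=
  (List.range c.length).countP (fun k => (c.take (k+1)).sum ≤ t)

/-- A permutation of `{0,…,n-1}` is a `(c_1,…,c_p)`-shuffle if it is strictly increasing
on each of the consecutive blocks of sizes `c_1,…,c_p`. -/
def IsShuffle {n : ℕ} (c : List ℕ) (σ : Equiv.Perm (Fin n)) : Prop :=
  ∀ i j : Fin n, (i : ℕ) < (j : ℕ) → blockOf c i = blockOf c j → σ i < σ j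

instance {n : ℕ} (c : List ℕ) :
    DecidablePred (fun σ : Equiv.Perm (Fin n) => IsShuffle c σ) := fun σ => by
  unfold IsShuffle; infer_instance

/-- A map `φ : A^n → A` vanishes on `p`-fold shuffle products if for every composition
`c` of `n` into `p` positive parts and all `a_1,…,a_n ∈ A` the signed sum of `φ` over all
`c`-shuffles vanishes: `Σ_σ sgn(σ) φ(a_{σ⁻¹(1)},…,a_{σ⁻¹(n)}) = 0`. -/
def VanishesOnShuffleProducts {A : Type*} [Ring A] (p n : ℕ) (φ : (Fin n → A) → A) : Prop :=
  ∀ c : List ℕ, c.length = p → (∀ x ∈ c, 0 < x) → c.sum = n →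
    ∀ a : Fin n → A,
      ∑ σ ∈ Finset.univ.filter (fun σ : Equiv.Perm (Fin n) => IsShuffle c σ),
        ((Equiv.Perm.sign σ : ℤˣ) : ℤ) • φ (fun t => a (σ.symm t)) = 0

/-!
The shuffle product of the one-letter word `x` with any word is the alternating sum of the
insertions of `x` into that word. For `x = 1` and up to a global sign, evaluating `φ` on it is
evaluating `d'φ`. By associativity of the shuffle product, `d'φ` on a `p`-fold product
`w₁ * ⋯ * w_p` is therefore, up to sign, `φ` on the `(p+1)`-fold product `1 * w₁ * ⋯ * w_p`.
-/

theorem blockOf_cons_of_lt {k t : ℕ} (c : List ℕ) (h : t < k) : blockOf (k :: c) t = 0 := by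
  rw [blockOf, List.countP_eq_zero]
  intro j _
  rw [decide_eq_true_eq, List.take_succ_cons, List.sum_cons]
  exact (Nat.lt_add_right _ h).not_ge

theorem blockOf_cons_add (k : ℕ) (c : List ℕ) (t : ℕ) :
    blockOf (k :: c) (k + t) = blockOf c t + 1 := by
  simp [blockOf, List.range_succ_eq_map, List.countP_map, Function.comp_def]

theorem insUnit_eq_insertNth {A : Type*} [One A] {m : ℕ} (i : Fin (m + 1)) (a : Fin m → A) :
    insUnit (n := m + 1) i a = i.insertNth (α := fun _ => A) 1 a := by
  rw [Fin.eq_insertNth_iff]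
  refine ⟨by simp [insUnit], funext fun j => ?_⟩
  rcases lt_or_ge j.castSucc i with h | h
  · have hji : (j : ℕ) < i := h
    simp [Fin.removeNth, Fin.succAbove_of_castSucc_lt _ _ h, insUnit, hji]
  · have hij : (i : ℕ) ≤ j := h
    simp [Fin.removeNth, Fin.succAbove_of_le_castSucc _ _ h, insUnit,
      show ¬ (j : ℕ) + 1 < i by omega, show (j : ℕ) + 1 ≠ i by omega]

theorem decomposeFin_apply_fst {m : ℕ} (τ : Equiv.Perm (Fin (m + 1))) :
    (Equiv.Perm.decomposeFin τ).1 = τ 0 := by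
  obtain ⟨⟨i, σ⟩, rfl⟩ := Equiv.Perm.decomposeFin.symm.surjective τ
  simp

section PermCons

variable {m : ℕ} (i : Fin (m + 1)) (σ : Equiv.Perm (Fin m))

/-- The decomposition of a permutation of `Fin (m + 1)` into its value `i` at `0` and the
permutation `σ` of `Fin m` that it induces between the complements of `0` and of `i`, each
identified with `Fin m` in increasing order. Unlike `Equiv.Perm.decomposeFin`, which uses
`Equiv.swap 0 i`, this keeps the relative order of the values at positive indices in `σ`. -/
def permCons : Fin (m + 1) × Equiv.Perm (Fin m) ≃ Equiv.Perm (Fin (m + 1)) where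
  toFun x := x.1.cycleRange⁻¹ * Equiv.Perm.decomposeFin.symm (0, x.2)
  invFun τ := (τ 0, (Equiv.Perm.decomposeFin ((τ 0).cycleRange * τ)).2)
  left_inv := by
    rintro ⟨i, σ⟩
    have apply_zero : (i.cycleRange⁻¹ * Equiv.Perm.decomposeFin.symm (0, σ)) 0 = i := by
      simp [Equiv.Perm.inv_def]
    simp only [apply_zero, mul_inv_cancel_left, Equiv.apply_symm_apply]
  right_inv τ := by
    have fst_eq_zero : (Equiv.Perm.decomposeFin ((τ 0).cycleRange * τ)).1 = 0 := by
      simp [decomposeFin_apply_fst]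
    have eta : (0, (Equiv.Perm.decomposeFin ((τ 0).cycleRange * τ)).2) =
        Equiv.Perm.decomposeFin ((τ 0).cycleRange * τ) := Prod.ext fst_eq_zero.symm rfl
    simp only [eta, Equiv.symm_apply_apply, inv_mul_cancel_left]

@[simp]
theorem permCons_apply_zero : permCons (i, σ) 0 = i := by
  simp [permCons, Equiv.Perm.inv_def]

@[simp]
theorem permCons_apply_succ (j : Fin m) : permCons (i, σ) j.succ = i.succAbove (σ j) := by
  simp [permCons, Equiv.Perm.inv_def]

theorem sign_permCons :
    Equiv.Perm.sign (permCons (i, σ)) = (-1) ^ (i : ℕ) * Equiv.Perm.sign σ := by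
  simp [permCons, Fin.sign_cycleRange]

theorem isShuffle_one_cons_permCons_iff (c : List ℕ) :
    IsShuffle (1 :: c) (permCons (i, σ)) ↔ IsShuffle c σ := by
  have blockOf_succ (t : ℕ) : blockOf (1 :: c) (t + 1) = blockOf c t + 1 := by
    rw [add_comm t, blockOf_cons_add]
  simp [IsShuffle, Fin.forall_fin_succ, blockOf_cons_of_lt, blockOf_succ]

theorem cons_comp_permCons_symm {α : Type*} (x : α) (a : Fin m → α) :
    (Fin.cons x a : Fin (m + 1) → α) ∘ (permCons (i, σ)).symm =
      i.insertNth (α := fun _ => α) x (a ∘ σ.symm) := by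
  rw [Equiv.comp_symm_eq]
  funext j
  cases j using Fin.cases <;> simp

end PermCons

section ShuffleSum

variable {α M : Type*} [AddCommGroup M] {m : ℕ}

/-- The signed sum of `φ` over the `c`-shuffles of the tuple `a`. If `φ` is multilinear and
`c` sums to `m`, it is the value of `φ` on the shuffle product of the blocks, of sizes given by
`c`, into which `c` cuts `a₁ ⊗ ⋯ ⊗ aₘ`. -/
def shuffleSum (c : List ℕ) (φ : (Fin m → α) → M) (a : Fin m → α) : M :=
  ∑ σ ∈ Finset.univ.filter (fun σ : Equiv.Perm (Fin m) => IsShuffle c σ),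
    ((Equiv.Perm.sign σ : ℤˣ) : ℤ) • φ (a ∘ σ.symm)

/-- The map sending a tuple to the alternating sum of the values of `φ` on the insertions of `x`
into it, used to compare `dUnit` with shuffle products having `x` as a factor. The insertion at
the front has sign `+1`, whereas in `dUnit` the insertion at the end does. -/
def alternatingInsert (x : α) (φ : (Fin (m + 1) → α) → M) (a : Fin m → α) : M :=
  ∑ i : Fin (m + 1), (-1 : ℤ) ^ (i : ℕ) • φ (i.insertNth (α := fun _ => α) x a)

theorem shuffleSum_zsmul (c : List ℕ) (k : ℤ) (φ : (Fin m → α) → M) (a : Fin m → α) :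
    shuffleSum c (k • φ) a = k • shuffleSum c φ a := by
  simp only [shuffleSum, Finset.smul_sum, Pi.smul_apply, smul_comm k]

theorem shuffleSum_one_cons (c : List ℕ) (φ : (Fin (m + 1) → α) → M) (x : α) (a : Fin m → α) :
    shuffleSum (1 :: c) φ (Fin.cons x a) = shuffleSum c (alternatingInsert x φ) a := by
  simp only [shuffleSum, alternatingInsert, Finset.sum_filter, Finset.smul_sum]
  rw [← permCons.sum_comp, Fintype.sum_prod_type_right]
  refine Finset.sum_congr rfl fun σ _ => ?_
  simp only [isShuffle_one_cons_permCons_iff, cons_comp_permCons_symm, sign_permCons]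
  split_ifs
  · refine Finset.sum_congr rfl fun i _ => ?_
    rw [smul_smul]
    congr 1
    push_cast
    exact mul_comm _ _
  · exact Finset.sum_const_zero

end ShuffleSum

theorem dUnit_eq_zsmul_alternatingInsert {A : Type*} [Ring A] {m : ℕ}
    (φ : (Fin (m + 1) → A) → A) :
    dUnit φ = (-1 : ℤ) ^ m • alternatingInsert 1 φ := by
  funext a
  simp only [dUnit, alternatingInsert, Pi.smul_apply, Finset.smul_sum, smul_smul,
    insUnit_eq_insertNth]
  refine Finset.sum_congr rfl fun i _ => ?_
  have neg_one_pow_sub : (-1 : ℤ) ^ (m - (i : ℕ)) = (-1) ^ m * (-1) ^ (i : ℕ) := by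
    rw [← pow_add]
    exact neg_one_pow_congr (by grind)
  rw [Nat.add_sub_cancel, neg_one_pow_sub]

theorem dUnit_vanishesOnShuffleProducts_general {A : Type*} [Ring A] {m p : ℕ}
    {φ : (Fin (m + 1) → A) → A} (hφ : VanishesOnShuffleProducts (p + 1) (m + 1) φ) :
    VanishesOnShuffleProducts p m (dUnit φ) := by
  intro c hlength hpos hsum a
  calc shuffleSum c (dUnit φ) a
      = (-1 : ℤ) ^ m • shuffleSum c (alternatingInsert 1 φ) a := by
        rw [dUnit_eq_zsmul_alternatingInsert]
        exact shuffleSum_zsmul ..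
    _ = (-1 : ℤ) ^ m • shuffleSum (1 :: c) φ (Fin.cons 1 a) := by rw [shuffleSum_one_cons]
    _ = (-1 : ℤ) ^ m • (0 : A) := by
        congr 1
        exact hφ (1 :: c) (by simp [hlength]) (by simpa using hpos)
          (by rw [List.sum_cons, hsum, add_comm]) (Fin.cons 1 a)
    _ = 0 := smul_zero _

/-- for `n ≥ 1`, `1 ≤ p ≤ n−1`, and an `R`-multilinear map `φ : A^n → A`
vanishing on `(p+1)`-fold shuffle products, the map `d'φ : A^{n−1} → A` vanishes on
`p`-fold shuffle products. -/
theorem dUnit_vanishesOnShuffleProducts {R A : Type*} [CommRing R] [Ring A] [Algebra R A]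
    (n p : ℕ) (hn : 1 ≤ n) (hp : 1 ≤ p) (hpn : p ≤ n - 1)
    (φ : MultilinearMap R (fun _ : Fin n => A) A)
    (hφ : VanishesOnShuffleProducts (p+1) n (⇑φ)) :
    VanishesOnShuffleProducts p (n-1) (dUnit (⇑φ)) := by
  obtain ⟨m, rfl⟩ := Nat.exists_eq_add_of_le' hn
  exact dUnit_vanishesOnShuffleProducts_general hφ
end

section
/- Let k be a field of characteristic zero, A a unital commutative k-algebra, n ≥ 1, r ≥ 1, and φ : A^n → A a k-multilinear map that vanishes on r-fold shuffle products. Define kφ : A^{n+1} → A by (kφ)(a_1,…,a_{n+1}) = (1/(n+1)) Σ_{i=1}^{n+1} (−1)^{i−1} a_i · φ(a_1,…,â_i,…,a_{n+1}) (the hat denoting omission of the i-th argument). Then kφ vanishes on (r+1)-fold shuffle products. (Hence k maps the Hodge component C^{p,q}(A,A) to C^{p+1,q}(A,A).) -/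
/-- The null-homotopy `k : C^n(A,A) → C^{n+1}(A,A)`:
`(kφ)(a_1,…,a_{n+1}) = (1/(n+1)) Σ_{i=1}^{n+1} (−1)^{i−1} a_i · φ(a_1,…,â_i,…,a_{n+1})`. -/
def kMap (k : Type*) {A : Type*} [Field k] [CommRing A] [Algebra k A]
    {n : ℕ} (φ : (Fin n → A) → A) : (Fin (n+1) → A) → A :=
  fun a => (((n : k) + 1)⁻¹) •
    ∑ i : Fin (n+1), ((-1 : ℤ) ^ (i : ℕ)) • (a i * φ (fun t => a (i.succAbove t)))

/-!
Functions on words form a commutative ring under the shuffle product. For `r ≥ 1`, the power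
`I ^ r` of its augmentation ideal is spanned, up to completion, by the shuffle products of `r`
nonempty words. Removing the letter `x` from words is a second-order differential operator `D`
with `D (I * I) ⊆ I`: the defect of the Leibniz rule for `D` is a derivation in each argument.
Hence `D` maps `I ^ (r + 1)` into `I ^ r`.

Pairing functions on words with the signed rearrangements of the arguments turns vanishing on
`r`-fold shuffle products into vanishing on `I ^ r`. Under this pairing the factor `a x` that
`kφ` pulls out of the arguments `a` corresponds to removing the letter `x`, so the pairing of `kφ`
with `f` is a combination of the pairings of `φ` with `D f`, one for each letter.
-/

section Lists

variable {X : Type*}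

theorem sublist_filter_iff_of_forall {p : X → Bool} {u w : List X} (hu : ∀ a ∈ u, p a) :
    u.Sublist (w.filter p) ↔ u.Sublist w := by
  refine ⟨fun h => h.trans List.filter_sublist, fun h => ?_⟩
  simpa only [List.filter_eq_self.2 hu] using h.filter p

theorem filter_mem_eq_iff_sublist [DecidableEq X] {u w : List X} (hw : w.Nodup) :
    w.filter (· ∈ u) = u ↔ u.Sublist w := by
  refine ⟨fun h => h ▸ List.filter_sublist, fun h => ?_⟩
  have hsub : u.Sublist (w.filter (· ∈ u)) :=
    (sublist_filter_iff_of_forall fun a ha => decide_eq_true ha).2 h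
  have hsubperm : (w.filter (· ∈ u)).Subperm u :=
    (hw.filter _).subperm fun a ha => of_decide_eq_true (List.mem_filter.1 ha).2
  exact (hsub.eq_of_length_le hsubperm.length_le).symm

theorem sublist_ofFn_iff_pairwise {n : ℕ} (e : Fin n ≃ X) {u : List X} :
    u.Sublist (List.ofFn e) ↔ u.Pairwise fun a b => e.symm a < e.symm b := by
  have he : (List.ofFn e).Pairwise fun a b => e.symm a < e.symm b := by
    simp [List.pairwise_ofFn]
  refine ⟨fun h => he.sublist h, fun h => ?_⟩
  have hu : u.Nodup := h.imp fun hab heq => hab.ne (congrArg e.symm heq)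
  have : Std.Antisymm fun a b => e.symm a ≤ e.symm b :=
    ⟨fun a b hab hba => e.symm.injective (hab.antisymm hba)⟩
  exact List.sublist_of_subperm_of_pairwise
    (hu.subperm fun a _ => List.mem_ofFn.2 (e.surjective a)) (h.imp le_of_lt) (he.imp le_of_lt)

theorem exists_perm_eq_ofFn {n : ℕ} {l : List (Fin n)} (h : l.Perm (List.finRange n)) :
    ∃ ρ : Equiv.Perm (Fin n), l = List.ofFn ρ := by
  induction l using List.ofFnRec with | _ m f
  obtain rfl : m = n := by simpa using h.length_eq
  have hf : Function.Injective f := List.nodup_ofFn.1 (h.nodup_iff.2 (List.nodup_finRange m))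
  exact ⟨Equiv.ofBijective f (Finite.injective_iff_bijective.1 hf), rfl⟩

theorem insertIdx_ofFn {n : ℕ} (i : Fin (n + 1)) (x : X) (v : Fin n → X) :
    (List.ofFn v).insertIdx i x = List.ofFn (i.insertNth x v : Fin (n + 1) → X) := by
  induction v using Fin.consInduction with
  | elim0 => simp [Fin.fin_one_eq_zero i]
  | cons a v ih =>
    cases i using Fin.cases with
    | zero => rw [Fin.val_zero, List.insertIdx_zero, Fin.insertNth_zero', ← List.ofFn_cons]
    | succ i =>
      rw [Fin.insertNth_succ_cons, List.ofFn_cons, List.ofFn_cons, Fin.val_succ,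
        List.insertIdx_succ_cons, ih]

end Lists

theorem blockOf_cons (m : ℕ) (c : List ℕ) (t : ℕ) :
    blockOf (m :: c) t = if t < m then 0 else blockOf c (t - m) + 1 := by
  have hsum (k : ℕ) : ((m :: c).take (k + 1)).sum = m + (c.take k).sum := by
    rw [List.take_succ_cons, List.sum_cons]
  rw [blockOf, List.length_cons, List.range_succ_eq_map, List.countP_cons, List.countP_map]
  simp only [hsum, Function.comp_def, Nat.succ_eq_add_one, List.take_zero, List.sum_nil, add_zero,
    decide_eq_true_eq]
  split_ifs with hmt htm htm
  · omega
  · refine congrArg (· + 1) (List.countP_congr fun k _ => ?_)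
    rw [decide_eq_true_eq, decide_eq_true_eq]
    omega
  · refine List.countP_eq_zero.2 fun k _ => ?_
    rw [decide_eq_true_eq]
    omega
  · omega

theorem forall_pairwise_iff_blockOf {X : Type*} (P : X → X → Prop) (L : List (List X)) :
    (∀ u ∈ L, u.Pairwise P) ↔
      ∀ i j (hj : j < L.flatten.length) (hij : i < j),
        blockOf (L.map List.length) i = blockOf (L.map List.length) j →
          P (L.flatten[i]'(hij.trans hj)) L.flatten[j] := by
  induction L with
  | nil => simp
  | cons u L ih =>
    rw [List.forall_mem_cons, ih, List.pairwise_iff_getElem]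
    simp only [List.map_cons, blockOf_cons, List.flatten_cons, List.length_append]
    constructor
    · rintro ⟨hhead, htail⟩ i j hj hij hblock
      by_cases hju : j < u.length
      · rw [List.getElem_append_left hju, List.getElem_append_left (hij.trans hju)]
        exact hhead _ _ _ _ hij
      · have hiu : ¬i < u.length := fun hiu => by simp [hiu, hju] at hblock
        rw [List.getElem_append_right (by omega), List.getElem_append_right (by omega)]
        exact htail _ _ _ (by omega) (by simpa [hiu, hju] using hblock)
    · intro h
      refine ⟨fun i j hi hj hij => ?_, fun i j hj hij hblock => ?_⟩
      · simpa [hi, hj] using h i j (by omega) hij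
      · simpa using h (u.length + i) (u.length + j) (by omega) (by omega) (by simpa using hblock)

theorem isShuffle_map_length_iff {X : Type*} {n : ℕ} (e : Fin n ≃ X) {L : List (List X)}
    (hL : L.flatten = List.ofFn e) (σ : Equiv.Perm (Fin n)) :
    IsShuffle (L.map List.length) σ ↔ ∀ u ∈ L, u.Sublist (List.ofFn (σ.symm.trans e)) := by
  simp only [sublist_ofFn_iff_pairwise]
  rw [forall_pairwise_iff_blockOf]
  simp only [hL, List.getElem_ofFn, Equiv.symm_trans_apply, Equiv.symm_symm,
    Equiv.symm_apply_apply, List.length_ofFn]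
  exact ⟨fun h i j hj hij => h ⟨i, hij.trans hj⟩ ⟨j, hj⟩ hij, fun h i j => h i j j.2⟩

section SecondOrder

variable {S : Type*} [CommRing S]

/-- The failure `D (f g) - D f g - f D g` of an additive map to be a derivation
(the *carré du champ* of `D`). -/
def leibnizDefect (D : S →+ S) (f g : S) : S :=
  D (f * g) - (D f * g + f * D g)

/-- Differential operators of order at most two, without a constant term: the Leibniz defect
is a derivation in its second argument (and, being symmetric, in its first). -/
def IsSecondOrder (D : S →+ S) : Prop :=
  ∀ f g h, leibnizDefect D f (g * h) = leibnizDefect D f g * h + g * leibnizDefect D f h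

theorem map_mul_eq_leibnizDefect_add (D : S →+ S) (f g : S) :
    D (f * g) = leibnizDefect D f g + (D f * g + f * D g) :=
  (sub_add_cancel _ _).symm

theorem leibnizDefect_add_right (D : S →+ S) (f g h : S) :
    leibnizDefect D f (g + h) = leibnizDefect D f g + leibnizDefect D f h := by
  simp only [leibnizDefect, mul_add, map_add]
  ring

variable {D : S →+ S} {I : Ideal S}

theorem leibnizDefect_mem (hI : ∀ f ∈ I, ∀ g ∈ I, D (f * g) ∈ I) {f g : S}
    (hf : f ∈ I) (hg : g ∈ I) : leibnizDefect D f g ∈ I :=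
  sub_mem (hI f hf g hg) (add_mem (I.mul_mem_left _ hg) (I.mul_mem_right _ hf))

namespace IsSecondOrder

theorem leibnizDefect_mem_pow (hD : IsSecondOrder D) (hI : ∀ f ∈ I, ∀ g ∈ I, D (f * g) ∈ I)
    {f : S} (hf : f ∈ I) (r : ℕ) : ∀ g ∈ I ^ r, leibnizDefect D f g ∈ I ^ r := by
  induction r with
  | zero => simp
  | succ r ih =>
    intro g hg
    rw [pow_succ] at hg ⊢
    induction hg using Submodule.mul_induction_on' with
    | mem_mul_mem g hg h hh =>
      rw [hD]
      exact add_mem (Ideal.mul_mem_mul (ih g hg) hh)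
        (Ideal.mul_mem_mul hg (leibnizDefect_mem hI hf hh))
    | add g _ h _ hg hh =>
      rw [leibnizDefect_add_right]
      exact add_mem hg hh

theorem map_mem_pow (hD : IsSecondOrder D) (hI : ∀ f ∈ I, ∀ g ∈ I, D (f * g) ∈ I) (r : ℕ) :
    ∀ f ∈ I ^ (r + 1), D f ∈ I ^ r := by
  induction r with
  | zero => simp
  | succ r ih =>
    intro f hf
    rw [pow_succ'] at hf
    induction hf using Submodule.mul_induction_on' with
    | mem_mul_mem f hf g hg =>
      rw [map_mul_eq_leibnizDefect_add]
      refine add_mem (hD.leibnizDefect_mem_pow hI hf _ g hg)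
        (add_mem (Ideal.mul_mem_left _ _ hg) ?_)
      rw [pow_succ']
      exact Ideal.mul_mem_mul hf (ih g hg)
    | add f _ g _ hf hg =>
      rw [map_add]
      exact add_mem hf hg

end IsSecondOrder

end SecondOrder

/-- Functions on words in the alphabet `X`, that is, formal series in noncommuting variables,
with the shuffle product: the coefficient of `f * g` at `w` is the sum of `f u * g v` over all
ways to split `w` into complementary subwords `u` and `v`. -/
def ShuffleSeries (R X : Type*) : Type _ := List X → R

namespace ShuffleSeries

variable {R X : Type*}

/-- The left derivative: the coefficient of `der a f` at `w` is that of `f` at `a w`. Series are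
handled through their constant terms and derivatives; in particular each `der a` is a derivation
for the shuffle product, and this determines the product. -/
def der (a : X) (f : ShuffleSeries R X) : ShuffleSeries R X := fun w => f (a :: w)

theorem der_apply (a : X) (f : ShuffleSeries R X) (w : List X) : der a f w = f (a :: w) := rfl

variable [CommRing R]

instance : AddCommGroup (ShuffleSeries R X) := inferInstanceAs (AddCommGroup (List X → R))

instance : Module R (ShuffleSeries R X) := inferInstanceAs (Module R (List X → R))

theorem zero_apply (w : List X) : (0 : ShuffleSeries R X) w = 0 := rfl

theorem add_apply (f g : ShuffleSeries R X) (w : List X) : (f + g) w = f w + g w := rfl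

theorem sub_apply (f g : ShuffleSeries R X) (w : List X) : (f - g) w = f w - g w := rfl

theorem smul_apply (c : R) (f : ShuffleSeries R X) (w : List X) : (c • f) w = c * f w := rfl

theorem sum_apply {ι : Type*} (s : Finset ι) (F : ι → ShuffleSeries R X) (w : List X) :
    (∑ i ∈ s, F i) w = ∑ i ∈ s, F i w :=
  Finset.sum_apply w s F

/-- The coefficient at a word of the shuffle product of two series. -/
def shuffleCoeff : List X → ShuffleSeries R X → ShuffleSeries R X → R
  | [], f, g => f [] * g []
  | a :: w, f, g => shuffleCoeff w (der a f) g + shuffleCoeff w f (der a g)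

instance : Mul (ShuffleSeries R X) := ⟨fun f g w => shuffleCoeff w f g⟩

instance : One (ShuffleSeries R X) := ⟨fun w => if w = [] then 1 else 0⟩

theorem der_add (a : X) (f g : ShuffleSeries R X) : der a (f + g) = der a f + der a g := rfl

theorem der_sub (a : X) (f g : ShuffleSeries R X) : der a (f - g) = der a f - der a g := rfl

theorem der_smul (a : X) (c : R) (f : ShuffleSeries R X) : der a (c • f) = c • der a f := rfl

theorem der_one (a : X) : der a (1 : ShuffleSeries R X) = 0 := rfl

theorem der_mul (a : X) (f g : ShuffleSeries R X) :
    der a (f * g) = der a f * g + f * der a g := rfl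

theorem one_nil : (1 : ShuffleSeries R X) [] = 1 := rfl

theorem mul_nil (f g : ShuffleSeries R X) : (f * g) [] = f [] * g [] := rfl

theorem mul_cons (f g : ShuffleSeries R X) (a : X) (w : List X) :
    (f * g) (a :: w) = (der a f * g) w + (f * der a g) w := rfl

protected theorem mul_comm (f g : ShuffleSeries R X) : f * g = g * f := by
  funext w
  induction w generalizing f g with
  | nil => rw [mul_nil, mul_nil, mul_comm]
  | cons a w ih => rw [mul_cons, mul_cons, ih, ih f, add_comm]

protected theorem add_mul (f g h : ShuffleSeries R X) : (f + g) * h = f * h + g * h := by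
  funext w
  induction w generalizing f g h with
  | nil => exact add_mul (f []) (g []) (h [])
  | cons a w ih =>
    simp only [mul_cons, der_add, add_apply, ih]
    exact add_add_add_comm _ _ _ _

protected theorem smul_mul (c : R) (f g : ShuffleSeries R X) : c • f * g = c • (f * g) := by
  funext w
  induction w generalizing f g with
  | nil => exact mul_assoc c (f []) (g [])
  | cons a w ih => simp only [mul_cons, der_smul, smul_apply, ih, mul_add]

protected theorem zero_mul (f : ShuffleSeries R X) : 0 * f = 0 := by
  rw [← zero_smul R (0 : ShuffleSeries R X), ShuffleSeries.smul_mul, zero_smul, zero_smul]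

protected theorem mul_add (f g h : ShuffleSeries R X) : f * (g + h) = f * g + f * h := by
  rw [ShuffleSeries.mul_comm, ShuffleSeries.add_mul, ShuffleSeries.mul_comm g,
    ShuffleSeries.mul_comm h]

protected theorem one_mul (f : ShuffleSeries R X) : 1 * f = f := by
  funext w
  induction w generalizing f with
  | nil => rw [mul_nil, one_nil, one_mul]
  | cons a w ih =>
    rw [mul_cons, der_one, ShuffleSeries.zero_mul, ih, zero_apply, zero_add, der_apply]

protected theorem mul_assoc (f g h : ShuffleSeries R X) : f * g * h = f * (g * h) := by
  funext w
  induction w generalizing f g h with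
  | nil => exact mul_assoc (f []) (g []) (h [])
  | cons a w ih =>
    simp only [mul_cons, der_mul, ShuffleSeries.add_mul, ShuffleSeries.mul_add, add_apply, ih]
    exact add_assoc _ _ _

instance : CommRing (ShuffleSeries R X) where
  __ := (inferInstance : AddCommGroup (ShuffleSeries R X))
  left_distrib := ShuffleSeries.mul_add
  right_distrib := ShuffleSeries.add_mul
  zero_mul := ShuffleSeries.zero_mul
  mul_zero f := by rw [ShuffleSeries.mul_comm, ShuffleSeries.zero_mul]
  mul_assoc := ShuffleSeries.mul_assoc
  one_mul := ShuffleSeries.one_mul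
  mul_one f := by rw [ShuffleSeries.mul_comm, ShuffleSeries.one_mul]
  mul_comm := ShuffleSeries.mul_comm

instance : Algebra R (ShuffleSeries R X) :=
  Algebra.ofModule ShuffleSeries.smul_mul fun c f g => by
    rw [mul_comm, ShuffleSeries.smul_mul, mul_comm]

theorem mul_apply_congr {f f' g g' : ShuffleSeries R X} (w : List X)
    (hf : ∀ v, v.Sublist w → f v = f' v) (hg : ∀ v, v.Sublist w → g v = g' v) :
    (f * g) w = (f' * g') w := by
  induction w generalizing f f' g g' with
  | nil => rw [mul_nil, mul_nil, hf [] .slnil, hg [] .slnil]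
  | cons a w ih =>
    rw [mul_cons, mul_cons]
    congr 1
    · exact ih (fun v hv => hf _ (hv.cons_cons a)) fun v hv => hg v (hv.cons a)
    · exact ih (fun v hv => hf v (hv.cons a)) fun v hv => hg _ (hv.cons_cons a)

theorem exists_perm_append_of_mul_apply_ne_zero {f g : ShuffleSeries R X} {w : List X}
    (h : (f * g) w ≠ 0) : ∃ u v, f u ≠ 0 ∧ g v ≠ 0 ∧ w.Perm (u ++ v) := by
  induction w generalizing f g with
  | nil => exact ⟨[], [], left_ne_zero_of_mul h, right_ne_zero_of_mul h, .nil⟩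
  | cons a w ih =>
    have hsummand : (der a f * g) w ≠ 0 ∨ (f * der a g) w ≠ 0 := by
      by_contra! hzero
      exact h (by rw [mul_cons, hzero.1, hzero.2, add_zero])
    rcases hsummand with h | h
    · obtain ⟨u, v, hu, hv, hw⟩ := ih h
      exact ⟨a :: u, v, hu, hv, hw.cons a⟩
    · obtain ⟨u, v, hu, hv, hw⟩ := ih h
      exact ⟨u, a :: v, hu, hv, (hw.cons a).trans List.perm_middle.symm⟩

theorem mul_apply_eq_filter (p : X → Bool) {f g : ShuffleSeries R X}
    (hf : ∀ v, f v ≠ 0 → ∀ a ∈ v, p a) (hg : ∀ v, g v ≠ 0 → ∀ a ∈ v, !p a) (w : List X) :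
    (f * g) w = f (w.filter p) * g (w.filter (!p ·)) := by
  induction w generalizing f g with
  | nil => rfl
  | cons a w ih =>
    rw [mul_cons, ih (f := der a f) (fun v hv b hb => hf _ hv b (.tail a hb)) hg,
      ih (g := der a g) hf fun v hv b hb => hg _ hv b (.tail a hb), der_apply, der_apply]
    cases hp : p a with
    | true =>
      have : g (a :: w.filter (!p ·)) = 0 := by
        by_contra h
        simpa [hp] using hg _ h a
      simp [hp, this]
    | false =>
      have : f (a :: w.filter p) = 0 := by
        by_contra h
        simpa [hp] using hf _ h a
      simp [hp, this]

/-- Substitution of letters along a map of alphabets, by pullback of coefficients. -/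
def comap {Y : Type*} (ι : X → Y) : ShuffleSeries R Y →+* ShuffleSeries R X where
  toFun f w := f (w.map ι)
  map_zero' := rfl
  map_add' _ _ := rfl
  map_one' := funext fun w => if_congr List.map_eq_nil_iff rfl rfl
  map_mul' f g := funext fun w => by
    induction w generalizing f g with
    | nil => rfl
    | cons a w ih => exact congrArg₂ (· + ·) (ih (der (ι a) f) g) (ih f (der (ι a) g))

theorem comap_apply {Y : Type*} (ι : X → Y) (f : ShuffleSeries R Y) (w : List X) :
    comap ι f w = f (w.map ι) := rfl

variable (R X) in
/-- The augmentation ideal, of series without constant term. Its powers play the role of the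
spaces `Sh^r`. -/
def augIdeal : Ideal (ShuffleSeries R X) where
  carrier := {f | f [] = 0}
  zero_mem' := rfl
  add_mem' hf hg := (congrArg₂ (· + ·) hf hg).trans (add_zero 0)
  smul_mem' f _ hg := (congrArg (f [] * ·) hg).trans (mul_zero (f []))

theorem mem_augIdeal {f : ShuffleSeries R X} : f ∈ augIdeal R X ↔ f [] = 0 := Iff.rfl

theorem comap_mem_augIdeal_pow {Y : Type*} (ι : X → Y) {r : ℕ} {f : ShuffleSeries R Y}
    (hf : f ∈ augIdeal R Y ^ r) : comap ι f ∈ augIdeal R X ^ r := by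
  have h : augIdeal R Y ≤ (augIdeal R X).comap (comap ι) := fun f hf => hf
  exact Ideal.mem_comap.1 (Ideal.le_comap_pow (comap ι) r (Ideal.pow_right_mono h r hf))

/-- The operator whose value on words removes one occurrence of the letter `x` in all possible
ways. On series it sums the coefficients at all words obtained by inserting `x`. -/
def delete (x : X) : ShuffleSeries R X →+ ShuffleSeries R X where
  toFun f w := ∑ i ∈ Finset.range (w.length + 1), f (w.insertIdx i x)
  map_zero' := funext fun _ => Finset.sum_const_zero
  map_add' _ _ := funext fun _ => Finset.sum_add_distrib

theorem delete_apply (x : X) (f : ShuffleSeries R X) (w : List X) :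
    delete x f w = ∑ i ∈ Finset.range (w.length + 1), f (w.insertIdx i x) := rfl

theorem delete_nil (x : X) (f : ShuffleSeries R X) : delete x f [] = der x f [] := by
  simp [delete_apply, der_apply]

theorem der_delete (a x : X) (f : ShuffleSeries R X) :
    der a (delete x f) = delete x (der a f) + der a (der x f) := by
  funext w
  rw [der_apply, delete_apply, List.length_cons, Finset.sum_range_succ']
  rfl

theorem leibnizDefect_delete_nil (x : X) (f g : ShuffleSeries R X) :
    leibnizDefect (delete x) f g [] = 0 := by
  simp only [leibnizDefect, sub_apply, add_apply, mul_nil, delete_nil, der_mul, sub_self]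

theorem der_leibnizDefect_delete (a x : X) (f g : ShuffleSeries R X) :
    der a (leibnizDefect (delete x) f g) =
      leibnizDefect (delete x) (der a f) g + leibnizDefect (delete x) f (der a g) +
        (der x f * der a g + der a f * der x g) := by
  simp only [leibnizDefect, der_sub, der_add, der_mul, der_delete, map_add]
  ring

theorem isSecondOrder_delete (x : X) :
    IsSecondOrder (delete x : ShuffleSeries R X →+ ShuffleSeries R X) := by
  intro f g h
  funext w
  induction w generalizing f g h with
  | nil => simp only [add_apply, mul_nil, leibnizDefect_delete_nil, zero_mul, mul_zero, add_zero]
  | cons a w ih =>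
    change der a (leibnizDefect _ f (g * h)) w = der a _ w
    rw [der_leibnizDefect_delete, der_mul a, der_mul x, leibnizDefect_add_right, add_apply,
      add_apply, add_apply, ih, ih, ih, ← add_apply, ← add_apply, ← add_apply, der_add, der_mul,
      der_mul, der_leibnizDefect_delete, der_leibnizDefect_delete]
    exact congrFun (show (_ : ShuffleSeries R X) = _ by ring) w

theorem delete_mul_mem_augIdeal (x : X) {f g : ShuffleSeries R X} (hf : f ∈ augIdeal R X)
    (hg : g ∈ augIdeal R X) : delete x (f * g) ∈ augIdeal R X := by
  rw [mem_augIdeal] at *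
  rw [delete_nil, der_mul, add_apply, mul_nil, mul_nil, hf, hg, mul_zero, zero_mul, add_zero]

theorem delete_mem_augIdeal_pow (x : X) {r : ℕ} {f : ShuffleSeries R X}
    (hf : f ∈ augIdeal R X ^ (r + 1)) : delete x f ∈ augIdeal R X ^ r :=
  (isSecondOrder_delete x).map_mem_pow (fun _ hf _ hg => delete_mul_mem_augIdeal x hf hg) r f hf

section Words

variable [DecidableEq X]

variable (R) in
/-- The indicator function of a word. -/
def word (u : List X) : ShuffleSeries R X := fun w => if w = u then 1 else 0

theorem word_apply (u w : List X) : word R u w = if w = u then 1 else 0 := rfl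

theorem eq_of_word_apply_ne_zero {u w : List X} (h : word R u w ≠ 0) : w = u :=
  of_not_not fun hne => h (if_neg hne)

theorem word_mem_augIdeal {u : List X} (hu : u ≠ []) : word R u ∈ augIdeal R X :=
  if_neg hu.symm

theorem prod_word_mem_augIdeal_pow {L : List (List X)} (hL : ∀ u ∈ L, u ≠ []) :
    (L.map (word R)).prod ∈ augIdeal R X ^ L.length := by
  induction L with
  | nil => simp
  | cons u L ih =>
    rw [List.forall_mem_cons] at hL
    rw [List.map_cons, List.prod_cons, List.length_cons, pow_succ']
    exact Ideal.mul_mem_mul (word_mem_augIdeal hL.1) (ih hL.2)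

theorem perm_flatten_of_prod_word_apply_ne_zero {L : List (List X)} {w : List X}
    (h : (L.map (word R)).prod w ≠ 0) : w.Perm L.flatten := by
  induction L generalizing w with
  | nil => exact .of_eq (of_not_not fun hne => h (if_neg hne))
  | cons u L ih =>
    rw [List.map_cons, List.prod_cons] at h
    obtain ⟨u', v, hu, hv, hw⟩ := exists_perm_append_of_mul_apply_ne_zero h
    rw [eq_of_word_apply_ne_zero hu] at hw
    exact hw.trans ((ih hv).append_left u)

theorem prod_word_apply {L : List (List X)} {w : List X} (hw : w.Nodup)
    (hL : w.Perm L.flatten) :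
    (L.map (word R)).prod w = if ∀ u ∈ L, u.Sublist w then 1 else 0 := by
  induction L generalizing w with
  | nil => simp [List.perm_nil.1 hL, one_nil]
  | cons u L ih =>
    rw [List.flatten_cons] at hL
    have hdisj : u.Disjoint L.flatten := List.disjoint_of_nodup_append (hL.nodup_iff.1 hw)
    have hrest : (w.filter fun a => !decide (a ∈ u)).Perm L.flatten := by
      refine (hL.filter _).trans (.of_eq ?_)
      rw [List.filter_append, List.filter_eq_nil_iff.2 (by simp), List.nil_append,
        List.filter_eq_self]
      simpa using fun a ha hau => hdisj hau (List.mem_flatten.2 ha)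
    rw [List.map_cons, List.prod_cons, mul_apply_eq_filter (fun a => decide (a ∈ u)),
      ih (hw.filter _) hrest, word_apply, ite_zero_mul_ite_zero, one_mul]
    · refine if_congr ?_ rfl rfl
      rw [filter_mem_eq_iff_sublist hw, List.forall_mem_cons]
      refine and_congr_right fun _ => forall₂_congr fun z hz =>
        sublist_filter_iff_of_forall fun a ha => ?_
      simpa using fun hau => hdisj hau (List.mem_flatten.2 ⟨z, hz, ha⟩)
    · intro v hv a ha
      simpa [← eq_of_word_apply_ne_zero hv] using ha
    · intro v hv a ha
      have := (perm_flatten_of_prod_word_apply_ne_zero hv).subset ha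
      simpa using fun hau => hdisj hau this

-- A series need not be a finite combination of words, but it agrees with one on finitely many
-- words; closure under subwords makes this compatible with products.
theorem exists_mem_span_word (S : Finset (List X)) {f : ShuffleSeries R X}
    (hf : f ∈ augIdeal R X) :
    ∃ g ∈ Submodule.span R (word R '' {u : List X | u ≠ []}), ∀ w ∈ S, f w = g w := by
  refine ⟨∑ u ∈ S, f u • word R u, sum_mem fun u _ => ?_, fun w hw => ?_⟩
  · rcases eq_or_ne u [] with rfl | hu
    · rw [mem_augIdeal.1 hf, zero_smul]
      exact zero_mem _
    · exact Submodule.smul_mem _ _ (Submodule.subset_span ⟨u, hu, rfl⟩)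
  · simp only [sum_apply, smul_apply, word_apply, mul_ite, mul_one, mul_zero]
    exact ((Finset.sum_ite_eq S w f).trans (if_pos hw)).symm

theorem exists_mem_span_word_pow {S : Finset (List X)}
    (hS : ∀ w ∈ S, ∀ v, v.Sublist w → v ∈ S) (r : ℕ) {f : ShuffleSeries R X}
    (hf : f ∈ augIdeal R X ^ (r + 1)) :
    ∃ g ∈ Submodule.span R (word R '' {u : List X | u ≠ []}) ^ (r + 1),
      ∀ w ∈ S, f w = g w := by
  induction r generalizing f with
  | zero =>
    rw [zero_add, pow_one] at hf ⊢
    exact exists_mem_span_word S hf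
  | succ r ih =>
    rw [pow_succ] at hf ⊢
    induction hf using Submodule.mul_induction_on' with
    | mem_mul_mem f hf g hg =>
      obtain ⟨f', hf', hff'⟩ := ih hf
      obtain ⟨g', hg', hgg'⟩ := exists_mem_span_word S hg
      exact ⟨f' * g', Submodule.mul_mem_mul hf' hg', fun w hw => mul_apply_congr w
        (fun v hv => hff' v (hS w hw v hv)) fun v hv => hgg' v (hS w hw v hv)⟩
    | add f _ g _ hf hg =>
      obtain ⟨f', hf', hff'⟩ := hf
      obtain ⟨g', hg', hgg'⟩ := hg
      exact ⟨f' + g', add_mem hf' hg', fun w hw => congrArg₂ (· + ·) (hff' w hw) (hgg' w hw)⟩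

end Words

end ShuffleSeries

section InsertPerm

variable {n : ℕ}

/-- The permutation sending `i` to `x` and inducing `τ` on the complements. -/
def insertPerm (i x : Fin (n + 1)) (τ : Equiv.Perm (Fin n)) : Equiv.Perm (Fin (n + 1)) :=
  x.cycleRange⁻¹ * Equiv.Perm.decomposeFin.symm (0, τ) * i.cycleRange

theorem insertPerm_self (i x : Fin (n + 1)) (τ : Equiv.Perm (Fin n)) :
    insertPerm i x τ i = x := by
  simp [insertPerm, Equiv.Perm.mul_apply]

theorem insertPerm_succAbove (i x : Fin (n + 1)) (τ : Equiv.Perm (Fin n)) (t : Fin n) :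
    insertPerm i x τ (i.succAbove t) = x.succAbove (τ t) := by
  simp [insertPerm, Equiv.Perm.mul_apply]

theorem insertPerm_eq_insertNth (i x : Fin (n + 1)) (τ : Equiv.Perm (Fin n)) :
    ⇑(insertPerm i x τ) = i.insertNth x (x.succAbove ∘ τ) :=
  Fin.eq_insertNth_iff.2 ⟨insertPerm_self i x τ, funext (insertPerm_succAbove i x τ)⟩

theorem sign_insertPerm (i x : Fin (n + 1)) (τ : Equiv.Perm (Fin n)) :
    Equiv.Perm.sign (insertPerm i x τ) =
      (-1) ^ (x : ℕ) * (-1) ^ (i : ℕ) * Equiv.Perm.sign τ := by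
  simp [insertPerm, Equiv.Perm.decomposeFin.symm_sign, mul_right_comm]

theorem insertPerm_bijective (i : Fin (n + 1)) :
    Function.Bijective fun p : Fin (n + 1) × Equiv.Perm (Fin n) => insertPerm i p.1 p.2 := by
  rw [Fintype.bijective_iff_injective_and_card]
  refine ⟨?_, by simp [Fintype.card_perm, Nat.factorial_succ]⟩
  rintro ⟨x, τ⟩ ⟨y, ρ⟩ h
  obtain rfl : x = y := by simpa only [insertPerm_self] using DFunLike.congr_fun h i
  refine Prod.ext rfl (Equiv.ext fun t => ?_)
  simpa [insertPerm_succAbove] using DFunLike.congr_fun h (i.succAbove t)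

end InsertPerm

/-- The map `(n + 1) • kφ`, which makes sense over any commutative ring. -/
def unnormalizedKMap {A : Type*} [CommRing A] {n : ℕ} (φ : (Fin n → A) → A) :
    (Fin (n + 1) → A) → A :=
  fun a => ∑ i : Fin (n + 1), (-1 : ℤ) ^ (i : ℕ) • (a i * φ fun t => a (i.succAbove t))

namespace ShuffleSeries

variable {A : Type*} [CommRing A] {n : ℕ}

/-- The alternating sum of `φ` over all rearrangements `a ∘ τ` of the arguments, weighted by
the coefficients of a series at the words `τ`. The alphabet indexes the arguments, so that
letters of a word stay distinguishable when arguments coincide. -/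
def signedEval (φ : (Fin n → A) → A) (a : Fin n → A) : ShuffleSeries A (Fin n) →ₗ[A] A where
  toFun f := ∑ τ : Equiv.Perm (Fin n),
    (Equiv.Perm.sign τ : ℤ) • (f (List.ofFn τ) * φ (a ∘ τ))
  map_add' f g := by
    simp only [add_apply, add_mul, smul_add, Finset.sum_add_distrib]
  map_smul' c f := by
    simp only [smul_apply, RingHom.id_apply, smul_eq_mul, Finset.mul_sum, mul_smul_comm, mul_assoc]

theorem signedEval_apply (φ : (Fin n → A) → A) (a : Fin n → A) (f : ShuffleSeries A (Fin n)) :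
    signedEval φ a f = ∑ τ : Equiv.Perm (Fin n),
      (Equiv.Perm.sign τ : ℤ) • (f (List.ofFn τ) * φ (a ∘ τ)) := rfl

theorem signedEval_congr (φ : (Fin n → A) → A) (a : Fin n → A) {f g : ShuffleSeries A (Fin n)}
    (h : ∀ w : List (Fin n), w.length = n → f w = g w) : signedEval φ a f = signedEval φ a g := by
  simp only [signedEval_apply, h _ (List.length_ofFn ..)]

theorem prod_word_ofFn_apply {R X : Type*} [CommRing R] [DecidableEq X] (e : Fin n ≃ X)
    {L : List (List X)} (hL : L.flatten = List.ofFn e) (σ : Equiv.Perm (Fin n)) :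
    (L.map (word R)).prod (List.ofFn (σ.symm.trans e)) =
      if IsShuffle (L.map List.length) σ then 1 else 0 := by
  have hperm : (List.ofFn (σ.symm.trans e)).Perm L.flatten :=
    hL ▸ Equiv.Perm.ofFn_comp_perm σ.symm e
  rw [prod_word_apply (List.nodup_ofFn.2 (Equiv.injective _)) hperm]
  exact if_congr (isShuffle_map_length_iff e hL σ).symm rfl rfl

theorem signedEval_prod_word (φ : (Fin n → A) → A) (a : Fin n → A) {L : List (List (Fin n))}
    {ρ : Equiv.Perm (Fin n)} (hL : L.flatten = List.ofFn ρ) :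
    signedEval φ a (L.map (word A)).prod = (Equiv.Perm.sign ρ : ℤ) •
      ∑ σ ∈ Finset.univ.filter fun σ : Equiv.Perm (Fin n) => IsShuffle (L.map List.length) σ,
        (Equiv.Perm.sign σ : ℤ) • φ fun t => a (ρ (σ.symm t)) := by
  rw [signedEval_apply, Finset.sum_filter, Finset.smul_sum,
    ← ((Equiv.inv _).trans (Equiv.mulLeft ρ)).sum_comp]
  refine Finset.sum_congr rfl fun σ _ => ?_
  change (Equiv.Perm.sign (ρ * σ⁻¹) : ℤ) •
    ((L.map (word A)).prod (List.ofFn (σ.symm.trans ρ)) * _) = _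
  rw [prod_word_ofFn_apply ρ hL, map_mul, Equiv.Perm.sign_inv, Units.val_mul, mul_smul, ite_mul,
    one_mul, zero_mul, smul_ite, smul_zero]
  rfl

theorem signedEval_prod_word_eq_zero {φ : (Fin n → A) → A} {L : List (List (Fin n))}
    (hφ : VanishesOnShuffleProducts L.length n φ) (a : Fin n → A) (hL : ∀ u ∈ L, u ≠ []) :
    signedEval φ a (L.map (word A)).prod = 0 := by
  by_cases hperm : L.flatten.Perm (List.finRange n)
  · obtain ⟨ρ, hρ⟩ := exists_perm_eq_ofFn hperm
    have hsum : (L.map List.length).sum = n := by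
      rw [← List.length_flatten, hρ, List.length_ofFn]
    have hpos : ∀ m ∈ L.map List.length, 0 < m := by
      simpa [List.length_pos_iff] using hL
    rw [signedEval_prod_word φ a hρ]
    exact (congrArg _ (hφ _ (L.length_map _) hpos hsum (a ∘ ρ))).trans (smul_zero _)
  · refine Finset.sum_eq_zero fun τ _ => ?_
    have hcoeff : (L.map (word A)).prod (List.ofFn τ) = 0 := by
      by_contra h
      refine hperm ((perm_flatten_of_prod_word_apply_ne_zero h).symm.trans ?_)
      exact List.ofFn_id n ▸ Equiv.Perm.ofFn_comp_perm τ id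
    rw [hcoeff, zero_mul, smul_zero]

open scoped Pointwise in
theorem signedEval_eq_zero_of_mem_span_word_pow {r : ℕ} {φ : (Fin n → A) → A}
    (hφ : VanishesOnShuffleProducts r n φ) (a : Fin n → A) {f : ShuffleSeries A (Fin n)}
    (hf : f ∈ Submodule.span A (word A '' {u : List (Fin n) | u ≠ []}) ^ r) :
    signedEval φ a f = 0 := by
  rw [Submodule.span_pow] at hf
  refine (Submodule.span_le (p := LinearMap.ker (signedEval φ a))).2 ?_ hf
  intro g hg
  obtain ⟨F, rfl⟩ := Set.mem_pow.1 hg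
  choose u hu hF using fun i => (F i).2
  have hzero : signedEval φ a ((List.ofFn u).map (word A)).prod = 0 :=
    signedEval_prod_word_eq_zero (by rwa [List.length_ofFn]) a
      fun v hv => by obtain ⟨i, rfl⟩ := List.mem_ofFn.1 hv; exact hu i
  rw [List.map_ofFn] at hzero
  simp only [Function.comp_def, hF] at hzero
  exact hzero

theorem signedEval_eq_zero_of_mem_augIdeal_pow {r : ℕ} {φ : (Fin n → A) → A}
    (hφ : VanishesOnShuffleProducts (r + 1) n φ) (a : Fin n → A) {f : ShuffleSeries A (Fin n)}
    (hf : f ∈ augIdeal A (Fin n) ^ (r + 1)) : signedEval φ a f = 0 := by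
  have hfin := List.finite_length_le (Fin n) n
  obtain ⟨g, hg, hfg⟩ := exists_mem_span_word_pow (S := hfin.toFinset)
    (fun w hw v hv => hfin.mem_toFinset.2 (hv.length_le.trans (hfin.mem_toFinset.1 hw))) r hf
  rw [signedEval_congr φ a fun w hw => hfg w (hfin.mem_toFinset.2 hw.le)]
  exact signedEval_eq_zero_of_mem_span_word_pow hφ a hg

theorem vanishesOnShuffleProducts_of_signedEval_eq_zero {p : ℕ} {φ : (Fin n → A) → A}
    (h : ∀ a, ∀ f ∈ augIdeal A (Fin n) ^ p, signedEval φ a f = 0) :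
    VanishesOnShuffleProducts p n φ := by
  intro c hc hpos hsum a
  have hlen : (List.finRange n).length = c.sum := by rw [List.length_finRange, hsum]
  obtain ⟨L, hflat, hmap⟩ : ∃ L : List (List (Fin n)),
      L.flatten = List.ofFn (1 : Equiv.Perm (Fin n)) ∧ L.map List.length = c :=
    ⟨c.splitLengths (List.finRange n),
      (List.flatten_splitLengths _ _ hlen.le).trans (List.ofFn_id n).symm,
      List.map_splitLengths_length _ _ hlen.ge⟩
  have hL : ∀ u ∈ L, u ≠ [] := fun u hu =>
    List.length_pos_iff.1 (hpos _ (hmap ▸ List.mem_map_of_mem hu))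
  have hLp : L.length = p := by rw [← hc, ← hmap, List.length_map]
  have hzero := h a _ (hLp ▸ prod_word_mem_augIdeal_pow hL)
  rwa [signedEval_prod_word φ a hflat, hmap, Equiv.Perm.sign_one, Units.val_one, one_smul]
    at hzero

theorem delete_ofFn {R X : Type*} [CommRing R] (x : X) (f : ShuffleSeries R X) (v : Fin n → X) :
    delete x f (List.ofFn v) =
      ∑ i : Fin (n + 1), f (List.ofFn (i.insertNth x v : Fin (n + 1) → X)) := by
  rw [delete_apply, Finset.sum_range, List.length_ofFn]
  simp only [insertIdx_ofFn]

theorem signedEval_comap_delete (φ : (Fin n → A) → A) (a : Fin (n + 1) → A) (x : Fin (n + 1))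
    (f : ShuffleSeries A (Fin (n + 1))) :
    signedEval φ (a ∘ x.succAbove) (comap x.succAbove (delete x f)) =
      ∑ i : Fin (n + 1), ∑ τ : Equiv.Perm (Fin n), (Equiv.Perm.sign τ : ℤ) •
        (f (List.ofFn (i.insertNth x (x.succAbove ∘ τ))) * φ fun t => a (x.succAbove (τ t))) := by
  rw [signedEval_apply, Finset.sum_comm]
  refine Finset.sum_congr rfl fun τ _ => ?_
  rw [comap_apply, List.map_ofFn, delete_ofFn, Finset.sum_mul, Finset.smul_sum]
  rfl

theorem sum_sign_smul_eq_sum_insertNth (φ : (Fin n → A) → A) (a : Fin (n + 1) → A)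
    (f : ShuffleSeries A (Fin (n + 1))) (i : Fin (n + 1)) :
    ∑ π : Equiv.Perm (Fin (n + 1)), (Equiv.Perm.sign π : ℤ) • (f (List.ofFn π) *
        (-1 : ℤ) ^ (i : ℕ) • (a (π i) * φ fun t => a (π (i.succAbove t)))) =
      ∑ x : Fin (n + 1), (-1 : ℤ) ^ (x : ℕ) • (a x *
        ∑ τ : Equiv.Perm (Fin n), (Equiv.Perm.sign τ : ℤ) •
          (f (List.ofFn (i.insertNth x (x.succAbove ∘ τ))) *
            φ fun t => a (x.succAbove (τ t)))) := by
  have hsign : ((-1 : A) ^ (i : ℕ)) * (-1) ^ (i : ℕ) = 1 := by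
    rw [← mul_pow, neg_mul_neg, one_mul, one_pow]
  rw [← (insertPerm_bijective i).sum_comp, Fintype.sum_prod_type]
  refine Finset.sum_congr rfl fun x _ => ?_
  rw [Finset.mul_sum, Finset.smul_sum]
  refine Finset.sum_congr rfl fun τ _ => ?_
  simp only [insertPerm_self, insertPerm_succAbove, sign_insertPerm, insertPerm_eq_insertNth,
    zsmul_eq_mul]
  push_cast
  linear_combination ((-1) ^ (x : ℕ) * (Equiv.Perm.sign τ : ℤ) * a x *
    f (List.ofFn (i.insertNth x (x.succAbove ∘ τ))) * φ fun t => a (x.succAbove (τ t))) * hsign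

theorem signedEval_unnormalizedKMap (φ : (Fin n → A) → A) (a : Fin (n + 1) → A)
    (f : ShuffleSeries A (Fin (n + 1))) :
    signedEval (unnormalizedKMap φ) a f = ∑ x : Fin (n + 1), (-1 : ℤ) ^ (x : ℕ) •
      (a x * signedEval φ (a ∘ x.succAbove) (comap x.succAbove (delete x f))) := by
  rw [signedEval_apply]
  simp only [unnormalizedKMap, Function.comp_apply, Finset.mul_sum, Finset.smul_sum]
  rw [Finset.sum_comm]
  simp only [sum_sign_smul_eq_sum_insertNth, signedEval_comap_delete]
  rw [Finset.sum_comm]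
  simp only [Finset.mul_sum, Finset.smul_sum]

end ShuffleSeries

theorem VanishesOnShuffleProducts.const_smul {S A : Type*} [Ring A] [DistribSMul S A] {p n : ℕ}
    {φ : (Fin n → A) → A} (hφ : VanishesOnShuffleProducts p n φ) (s : S) :
    VanishesOnShuffleProducts p n fun a => s • φ a := by
  intro c hc hpos hsum a
  simp only [smul_comm _ s, ← Finset.smul_sum, hφ c hc hpos hsum a, smul_zero]

open ShuffleSeries in
theorem kMap_vanishesOnShuffleProducts_general {A : Type*} [CommRing A] {n r : ℕ} (hr : 1 ≤ r)
    {φ : (Fin n → A) → A} (hφ : VanishesOnShuffleProducts r n φ) :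
    VanishesOnShuffleProducts (r + 1) (n + 1) (unnormalizedKMap φ) := by
  obtain ⟨r, rfl⟩ := Nat.exists_eq_add_of_le' hr
  refine vanishesOnShuffleProducts_of_signedEval_eq_zero fun a f hf => ?_
  have hterm (x : Fin (n + 1)) :
      signedEval φ (a ∘ x.succAbove) (comap x.succAbove (delete x f)) = 0 :=
    signedEval_eq_zero_of_mem_augIdeal_pow hφ _
      (comap_mem_augIdeal_pow _ (delete_mem_augIdeal_pow x hf))
  simp only [signedEval_unnormalizedKMap, hterm, mul_zero, smul_zero, Finset.sum_const_zero]

/-- over a field `k` of characteristic zero, for a unital commutative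
`k`-algebra `A`, `n ≥ 1`, `r ≥ 1`, and a `k`-multilinear map `φ : A^n → A` vanishing on
`r`-fold shuffle products, the map `kφ : A^{n+1} → A` vanishes on `(r+1)`-fold shuffle
products. -/
theorem kMap_vanishesOnShuffleProducts {k A : Type*} [Field k] [CharZero k]
    [CommRing A] [Algebra k A]
    (n r : ℕ) (hn : 1 ≤ n) (hr : 1 ≤ r)
    (φ : MultilinearMap k (fun _ : Fin n => A) A)
    (hφ : VanishesOnShuffleProducts r n (⇑φ)) :
    VanishesOnShuffleProducts (r+1) (n+1) (kMap k (⇑φ)) := by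
  exact (kMap_vanishesOnShuffleProducts_general hr hφ).const_smul ((n : k) + 1)⁻¹
end
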